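/- arXiv:2001.00381 — 2 statements merged into one kernel-verified Lean document; each statement's English description precedes it below -/
import Mathlib

section
/- Let K be a bounded measurable subset of ℝ² with |K| > 0, let M_Cov(K) = U_K Λ_K U_Kᵀ be an eigendecomposition of its covariance matrix with eigenvalues λ_{K,1} ≥ λ_{K,2} > 0, choose α_K = (√(det M_Cov(K)) / |K|)^{1/2}, and let K̂ = F_K(K) with F_K(x) = α_K Λ_K^{−1/2} U_Kᵀ x. Then for every continuously differentiable v with square-integrable gradient on K, setting v̂ = v ∘ F_K^{−1}, the H¹ seminorms satisfy the two-sided bound √(λ_{K,2}/λ_{K,1}) · |v̂|²_{H¹(K̂)} ≤ |v|²_{H¹(K)} ≤ √(λ_{K,1}/λ_{K,2}) · |v̂|²_{H¹(K̂)}, where |v|²_{H¹(ω)} = ∫_ω |∇v|² dx. -/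
/-!
With `B = A_K⁻¹`, the chain rule and the change of variables `y = A_K x` give
`|v̂|²_{H¹(K̂)} = |det A_K| ∫_K |Bᵀ ∇v|²`. Since `U_K` is orthogonal, the singular values of `B` are
`√λ_{K,i} / α_K`, while `|det A_K| = α_K² / √(λ_{K,1} λ_{K,2})`. The scaling `α_K` cancels, so
`|det A_K| |Bᵀ g|²` lies between `√(λ_{K,2}/λ_{K,1}) |g|²` and `√(λ_{K,1}/λ_{K,2}) |g|²`.
-/

open MeasureTheory Matrix

/-- Barycenter of a set `K ⊆ ℝ²`. -/
noncomputable def bary (K : Set (Fin 2 → ℝ)) : Fin 2 → ℝ :=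
  fun i => ((volume K).toReal)⁻¹ * ∫ x in K, x i

/-- Covariance matrix of a set `K ⊆ ℝ²`. -/
noncomputable def cov (K : Set (Fin 2 → ℝ)) : Matrix (Fin 2) (Fin 2) ℝ :=
  Matrix.of fun i j => ((volume K).toReal)⁻¹ * ∫ x in K, (x i - bary K i) * (x j - bary K j)

/-- The matrix `A_K = α_K Λ_K^{-1/2} U_Kᵀ` of the map `F_K`. -/
noncomputable def AK (U : Matrix (Fin 2) (Fin 2) ℝ) (l : Fin 2 → ℝ) (α : ℝ) :
    Matrix (Fin 2) (Fin 2) ℝ :=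
  α • ((Matrix.diagonal fun i => (Real.sqrt (l i))⁻¹) * Uᵀ)

/-- The matrix `A_K⁻¹ = α_K⁻¹ U_K Λ_K^{1/2}` of the inverse map `F_K⁻¹`. -/
noncomputable def AKinv (U : Matrix (Fin 2) (Fin 2) ℝ) (l : Fin 2 → ℝ) (α : ℝ) :
    Matrix (Fin 2) (Fin 2) ℝ :=
  α⁻¹ • (U * Matrix.diagonal fun i => Real.sqrt (l i))

/-- Gradient of a scalar function on `ℝ²`, as the vector of partial derivatives. -/
noncomputable def grad (v : (Fin 2 → ℝ) → ℝ) (x : Fin 2 → ℝ) : Fin 2 → ℝ :=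
  fun i => fderiv ℝ v x (Pi.single i 1)

/-- The squared seminorm `|v|²_{H¹(ω)}`. It is a Bochner integral, hence `0` if `|∇v|²` is not
integrable on `ω`. -/
noncomputable def h1SeminormSq (v : (Fin 2 → ℝ) → ℝ) (ω : Set (Fin 2 → ℝ)) : ℝ :=
  ∫ x in ω, ∑ i, (grad v x i) ^ 2

section OrthogonalMatrix

variable {ι R : Type*} [Fintype ι] [DecidableEq ι] [CommRing R] {U : Matrix ι ι R}

lemma sum_sq_transpose_mulVec (hU : U * Uᵀ = 1) (g : ι → R) :
    ∑ i, (Uᵀ *ᵥ g) i ^ 2 = ∑ i, g i ^ 2 := by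
  have h : (Uᵀ *ᵥ g) ⬝ᵥ (Uᵀ *ᵥ g) = g ⬝ᵥ g := by
    rw [dotProduct_mulVec, vecMul_transpose, mulVec_mulVec, hU, one_mulVec]
  simpa only [dotProduct, ← sq] using h

lemma det_mul_diagonal_mul_transpose (hU : U * Uᵀ = 1) (l : ι → R) :
    (U * diagonal l * Uᵀ).det = ∏ i, l i := by
  rw [det_conj_of_mul_eq_one hU (mul_eq_one_comm.1 hU), det_diagonal]

variable [LinearOrder R] [IsStrictOrderedRing R]

lemma abs_det_eq_one_of_mul_transpose_eq_one (hU : U * Uᵀ = 1) : |U.det| = 1 := by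
  have h : U.det * U.det = 1 := by
    simpa only [det_mul, det_transpose, det_one] using congrArg det hU
  rcases mul_self_eq_one_iff.1 h with h | h <;> simp [h]

variable {l : ι → R} {m : R}

lemma mul_sum_sq_le_sum_mul_sq_transpose_mulVec (hU : U * Uᵀ = 1) (hm : ∀ i, m ≤ l i)
    (g : ι → R) : m * ∑ i, g i ^ 2 ≤ ∑ i, l i * (Uᵀ *ᵥ g) i ^ 2 := by
  rw [← sum_sq_transpose_mulVec hU, Finset.mul_sum]
  gcongr with i
  exact hm i

lemma sum_mul_sq_transpose_mulVec_le_mul_sum_sq (hU : U * Uᵀ = 1) (hm : ∀ i, l i ≤ m)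
    (g : ι → R) : ∑ i, l i * (Uᵀ *ᵥ g) i ^ 2 ≤ m * ∑ i, g i ^ 2 := by
  rw [← sum_sq_transpose_mulVec hU, Finset.mul_sum]
  gcongr with i
  exact hm i

end OrthogonalMatrix

lemma sqrt_div_mul_le_iff {a b x y : ℝ} (ha : 0 < a) (hb : 0 < b) :
    √(a / b) * x ≤ y ↔ x ≤ √(b / a) * y := by
  rw [← inv_div b a, Real.sqrt_inv, inv_mul_le_iff₀ (Real.sqrt_pos.2 (div_pos hb ha))]

lemma sqrt_div_eq_inv_sqrt_mul_sqrt_mul (a : ℝ) {b : ℝ} (hb : 0 ≤ b) :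
    √(b / a) = (√a * √b)⁻¹ * b := by
  rw [Real.sqrt_div hb, mul_inv, mul_assoc, inv_mul_eq_div √b, Real.div_sqrt, inv_mul_eq_div]

section Integration

lemma setIntegral_image_mulVec {ι E : Type*} [Fintype ι] [DecidableEq ι] [NormedAddCommGroup E]
    [NormedSpace ℝ E] {A : Matrix ι ι ℝ} (hA : A.det ≠ 0) (K : Set (ι → ℝ)) (f : (ι → ℝ) → E) :
    ∫ y in A.mulVec '' K, f y = |A.det| • ∫ x in K, f (A *ᵥ x) := by
  have hinj : Function.Injective A.mulVec := mulVec_injective_of_det_ne_zero hA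
  have hemb : MeasurableEmbedding A.mulVec :=
    (continuous_const.matrix_mulVec continuous_id).measurableEmbedding hinj
  have hmap : Measure.map A.mulVec volume = ENNReal.ofReal |A.det⁻¹| • volume :=
    Real.map_matrix_volume_pi_eq_smul_volume_pi hA
  rw [← hinj.preimage_image K, ← hemb.setIntegral_map, hmap, hinj.preimage_image,
    Measure.restrict_smul, integral_smul_measure, ENNReal.toReal_ofReal (abs_nonneg _), abs_inv,
    smul_inv_smul₀ (abs_ne_zero.2 hA)]

lemma mul_integral_le_and_integral_le_mul {X : Type*} [MeasurableSpace X] {μ : Measure X}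
    {f g : X → ℝ} {c C : ℝ} (hf : Integrable f μ) (hg : AEStronglyMeasurable g μ)
    (hc : ∀ᵐ x ∂μ, c * f x ≤ g x) (hC : ∀ᵐ x ∂μ, g x ≤ C * f x) :
    c * ∫ x, f x ∂μ ≤ ∫ x, g x ∂μ ∧ ∫ x, g x ∂μ ≤ C * ∫ x, f x ∂μ := by
  have hgi : Integrable g μ := integrable_of_le_of_le hg hc hC (hf.const_mul c) (hf.const_mul C)
  rw [← integral_const_mul, ← integral_const_mul]
  exact ⟨integral_mono_ae (hf.const_mul c) hgi hc, integral_mono_ae hgi (hf.const_mul C) hC⟩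

end Integration

section Gradient

variable {v : (Fin 2 → ℝ) → ℝ}

lemma fderiv_apply_eq_grad_dotProduct (v : (Fin 2 → ℝ) → ℝ) (x z : Fin 2 → ℝ) :
    fderiv ℝ v x z = grad v x ⬝ᵥ z := by
  conv_lhs => rw [pi_eq_sum_univ' z]
  simp only [map_sum, map_smul, smul_eq_mul, grad, dotProduct, mul_comm]

lemma measurable_grad (v : (Fin 2 → ℝ) → ℝ) : Measurable (grad v) :=
  measurable_pi_lambda _ fun i => measurable_fderiv_apply_const ℝ v (Pi.single i 1)

lemma grad_comp_mulVec {B : Matrix (Fin 2) (Fin 2) ℝ} {y : Fin 2 → ℝ}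
    (hv : DifferentiableAt ℝ v (B *ᵥ y)) :
    grad (v ∘ B.mulVec) y = Bᵀ *ᵥ grad v (B *ᵥ y) := by
  have hB : HasFDerivAt B.mulVec (toLin' B).toContinuousLinearMap y :=
    (toLin' B).toContinuousLinearMap.hasFDerivAt
  ext i
  calc grad (v ∘ B.mulVec) y i = fderiv ℝ v (B *ᵥ y) (B *ᵥ Pi.single i 1) := by
        rw [grad, (hv.hasFDerivAt.comp y hB).fderiv]; rfl
    _ = grad v (B *ᵥ y) ⬝ᵥ B.col i := by
        rw [fderiv_apply_eq_grad_dotProduct, mulVec_single_one]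
    _ = (Bᵀ *ᵥ grad v (B *ᵥ y)) i := dotProduct_comm _ _

variable {A B : Matrix (Fin 2) (Fin 2) ℝ} {K : Set (Fin 2 → ℝ)}

lemma h1SeminormSq_comp_mulVec_image (hBA : B * A = 1)
    (hv : ∀ᵐ x ∂volume.restrict K, DifferentiableAt ℝ v x) :
    h1SeminormSq (v ∘ B.mulVec) (A.mulVec '' K) =
      ∫ x in K, |A.det| * ∑ i, (Bᵀ *ᵥ grad v x) i ^ 2 := by
  have hcancel (x : Fin 2 → ℝ) : B *ᵥ (A *ᵥ x) = x := by rw [mulVec_mulVec, hBA, one_mulVec]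
  rw [h1SeminormSq, setIntegral_image_mulVec (det_ne_zero_of_left_inverse hBA), smul_eq_mul,
    ← integral_const_mul]
  refine integral_congr_ae (hv.mono fun x hx => ?_)
  dsimp only
  rw [grad_comp_mulVec (by rwa [hcancel]), hcancel]

lemma h1SeminormSq_comp_mulVec_image_bounds {c C : ℝ} (hBA : B * A = 1)
    (hc : ∀ g, c * ∑ i, g i ^ 2 ≤ |A.det| * ∑ i, (Bᵀ *ᵥ g) i ^ 2)
    (hC : ∀ g, |A.det| * ∑ i, (Bᵀ *ᵥ g) i ^ 2 ≤ C * ∑ i, g i ^ 2)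
    (hv : ∀ᵐ x ∂volume.restrict K, DifferentiableAt ℝ v x)
    (hvg : Integrable (fun x => ∑ i, grad v x i ^ 2) (volume.restrict K)) :
    c * h1SeminormSq v K ≤ h1SeminormSq (v ∘ B.mulVec) (A.mulVec '' K) ∧
      h1SeminormSq (v ∘ B.mulVec) (A.mulVec '' K) ≤ C * h1SeminormSq v K := by
  have hmeas : Measurable fun x => |A.det| * ∑ i, (Bᵀ *ᵥ grad v x) i ^ 2 :=
    (by fun_prop : Continuous fun g : Fin 2 → ℝ =>
      |A.det| * ∑ i, (Bᵀ *ᵥ g) i ^ 2).measurable.comp (measurable_grad v)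
  rw [h1SeminormSq_comp_mulVec_image hBA hv]
  exact mul_integral_le_and_integral_le_mul hvg hmeas.aestronglyMeasurable
    (.of_forall fun x => hc (grad v x)) (.of_forall fun x => hC (grad v x))

end Gradient

section ReferenceMap

variable {U : Matrix (Fin 2) (Fin 2) ℝ} {l : Fin 2 → ℝ} {α : ℝ}

lemma AKinv_mul_AK (hU : U * Uᵀ = 1) (hl : ∀ i, 0 < l i) (hα : α ≠ 0) :
    AKinv U l α * AK U l α = 1 := by
  have hdiag : (diagonal fun i => √(l i)) * (diagonal fun i => (√(l i))⁻¹) = 1 := by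
    rw [diagonal_mul_diagonal, ← diagonal_one]
    exact congrArg diagonal (funext fun i => mul_inv_cancel₀ (Real.sqrt_pos.2 (hl i)).ne')
  rw [AKinv, AK, smul_mul_smul_comm, inv_mul_cancel₀ hα, one_smul, Matrix.mul_assoc,
    ← Matrix.mul_assoc (diagonal _), hdiag, Matrix.one_mul, hU]

lemma abs_det_AK (hU : U * Uᵀ = 1) (l : Fin 2 → ℝ) (α : ℝ) :
    |(AK U l α).det| = α ^ 2 * (√(l 0) * √(l 1))⁻¹ := by
  rw [AK, det_smul, det_mul, det_diagonal, det_transpose, Fin.prod_univ_two, Fintype.card_fin,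
    abs_mul, abs_mul, abs_det_eq_one_of_mul_transpose_eq_one hU, mul_one, abs_sq, ← mul_inv,
    abs_of_nonneg (by positivity)]

lemma sum_sq_AKinv_transpose_mulVec (hl : ∀ i, 0 ≤ l i) (g : Fin 2 → ℝ) :
    ∑ i, ((AKinv U l α)ᵀ *ᵥ g) i ^ 2 = (α ^ 2)⁻¹ * ∑ i, l i * (Uᵀ *ᵥ g) i ^ 2 := by
  rw [AKinv, transpose_smul, transpose_mul, diagonal_transpose, smul_mulVec, ← mulVec_mulVec,
    Finset.mul_sum]
  refine Finset.sum_congr rfl fun i _ => ?_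
  rw [Pi.smul_apply, mulVec_diagonal, smul_eq_mul, mul_pow, mul_pow, Real.sq_sqrt (hl i), inv_pow]

lemma abs_det_AK_mul_sum_sq (hU : U * Uᵀ = 1) (hl : ∀ i, 0 ≤ l i) (hα : α ≠ 0)
    (g : Fin 2 → ℝ) :
    |(AK U l α).det| * ∑ i, ((AKinv U l α)ᵀ *ᵥ g) i ^ 2 =
      (√(l 0) * √(l 1))⁻¹ * ∑ i, l i * (Uᵀ *ᵥ g) i ^ 2 := by
  rw [abs_det_AK hU, sum_sq_AKinv_transpose_mulVec hl]
  field_simp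

lemma sqrt_div_mul_sum_sq_le (hU : U * Uᵀ = 1) (hl : 0 < l 1) (hle : l 1 ≤ l 0) (hα : α ≠ 0)
    (g : Fin 2 → ℝ) :
    √(l 1 / l 0) * ∑ i, g i ^ 2 ≤ |(AK U l α).det| * ∑ i, ((AKinv U l α)ᵀ *ᵥ g) i ^ 2 := by
  have hl0 : 0 < l 0 := hl.trans_le hle
  rw [abs_det_AK_mul_sum_sq hU (Fin.forall_fin_two.2 ⟨hl0.le, hl.le⟩) hα,
    sqrt_div_eq_inv_sqrt_mul_sqrt_mul _ hl.le, mul_assoc]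
  gcongr
  exact mul_sum_sq_le_sum_mul_sq_transpose_mulVec hU (Fin.forall_fin_two.2 ⟨hle, le_rfl⟩) g

lemma le_sqrt_div_mul_sum_sq (hU : U * Uᵀ = 1) (hl : 0 < l 1) (hle : l 1 ≤ l 0) (hα : α ≠ 0)
    (g : Fin 2 → ℝ) :
    |(AK U l α).det| * ∑ i, ((AKinv U l α)ᵀ *ᵥ g) i ^ 2 ≤ √(l 0 / l 1) * ∑ i, g i ^ 2 := by
  have hl0 : 0 < l 0 := hl.trans_le hle
  rw [abs_det_AK_mul_sum_sq hU (Fin.forall_fin_two.2 ⟨hl0.le, hl.le⟩) hα,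
    sqrt_div_eq_inv_sqrt_mul_sqrt_mul _ hl0.le, mul_comm √(l 1), mul_assoc]
  gcongr
  exact sum_mul_sq_transpose_mulVec_le_mul_sum_sq hU (Fin.forall_fin_two.2 ⟨le_rfl, hle⟩) g

lemma sqrt_sqrt_det_cov_div_volume_pos {K : Set (Fin 2 → ℝ)} (hKpos : 0 < volume K)
    (hKfin : volume K ≠ ⊤) (hU : U * Uᵀ = 1) (hl : ∀ i, 0 < l i)
    (hdecomp : cov K = U * diagonal l * Uᵀ) :
    0 < √(√(cov K).det / (volume K).toReal) := by
  have hdet : 0 < (cov K).det := by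
    rw [hdecomp, det_mul_diagonal_mul_transpose hU]
    exact Finset.prod_pos fun i _ => hl i
  have hvol : 0 < (volume K).toReal := ENNReal.toReal_pos hKpos.ne' hKfin
  positivity

theorem h1_seminorm_equivalence_general {K : Set (Fin 2 → ℝ)} (hU : U * Uᵀ = 1) (hl : 0 < l 1)
    (hle : l 1 ≤ l 0) (hα : α ≠ 0) {v : (Fin 2 → ℝ) → ℝ}
    (hv : ∀ᵐ x ∂volume.restrict K, DifferentiableAt ℝ v x)
    (hvg : Integrable (fun x => ∑ i, grad v x i ^ 2) (volume.restrict K)) :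
    √(l 1 / l 0) * h1SeminormSq (v ∘ (AKinv U l α).mulVec) ((AK U l α).mulVec '' K) ≤
        h1SeminormSq v K ∧
      h1SeminormSq v K ≤
        √(l 0 / l 1) * h1SeminormSq (v ∘ (AKinv U l α).mulVec) ((AK U l α).mulVec '' K) := by
  have hl0 : 0 < l 0 := hl.trans_le hle
  have hinv : AKinv U l α * AK U l α = 1 :=
    AKinv_mul_AK hU (Fin.forall_fin_two.2 ⟨hl0, hl⟩) hα
  obtain ⟨hlower, hupper⟩ := h1SeminormSq_comp_mulVec_image_bounds hinv
    (sqrt_div_mul_sum_sq_le hU hl hle hα) (le_sqrt_div_mul_sum_sq hU hl hle hα) hv hvg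
  exact ⟨(sqrt_div_mul_le_iff hl hl0).2 hupper, (sqrt_div_mul_le_iff hl hl0).1 hlower⟩

end ReferenceMap

/-- Two-sided bound between the `H¹` seminorms of `v` on `K` and of `v̂ = v ∘ F_K⁻¹`
on the reference element `K̂ = F_K(K)`:
`√(λ₂/λ₁) |v̂|²_{H¹(K̂)} ≤ |v|²_{H¹(K)} ≤ √(λ₁/λ₂) |v̂|²_{H¹(K̂)}`. -/
theorem h1_seminorm_equivalence (K : Set (Fin 2 → ℝ)) (hK : MeasurableSet K)
    (hKb : Bornology.IsBounded K) (hKpos : 0 < volume K)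
    (U : Matrix (Fin 2) (Fin 2) ℝ) (hU : U * Uᵀ = 1)
    (l : Fin 2 → ℝ) (hl : 0 < l 1) (hle : l 1 ≤ l 0)
    (hdecomp : cov K = U * Matrix.diagonal l * Uᵀ)
    (α : ℝ) (hα : α = Real.sqrt (Real.sqrt ((cov K).det) / (volume K).toReal))
    (v : (Fin 2 → ℝ) → ℝ) (hv : ContDiff ℝ 1 v)
    (hvg : MeasureTheory.Integrable (fun x => ∑ i, (grad v x i) ^ 2) (volume.restrict K)) :
    Real.sqrt (l 1 / l 0)
        * (∫ y in (AK U l α).mulVec '' K, ∑ i, (grad (v ∘ (AKinv U l α).mulVec) y i) ^ 2)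
      ≤ (∫ x in K, ∑ i, (grad v x i) ^ 2)
    ∧ (∫ x in K, ∑ i, (grad v x i) ^ 2)
      ≤ Real.sqrt (l 0 / l 1)
        * (∫ y in (AK U l α).mulVec '' K, ∑ i, (grad (v ∘ (AKinv U l α).mulVec) y i) ^ 2) := by
  have hα0 : α ≠ 0 := hα ▸ (sqrt_sqrt_det_cov_div_volume_pos hKpos hKb.measure_lt_top.ne hU
    (Fin.forall_fin_two.2 ⟨hl.trans_le hle, hl⟩) hdecomp).ne'
  exact h1_seminorm_equivalence_general hU hl hle hα0
    (.of_forall (hv.differentiable one_ne_zero)) hvg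
end

section
/- Let a ≥ b > 0, K* = (0,a) × (0,b), and w(x,y) = (x − a/2)(y − b/2)/(ab). Define the stabilization term S(w) = w(0,0)² + w(a,0)² + w(a,b)² + w(0,b)² as the sum of squared vertex values. Then S(w) = 1/4, and with λ₁ = a²/12, λ₂ = b²/12 the ratio satisfies the exact identity |w|²_{H¹(K*)} / S(w) = (1/3)(√(λ₁/λ₂) + √(λ₂/λ₁)) = (1/3)(a/b + b/a). -/
open MeasureTheory Matrix

/-- The open rectangle `K* = (0,a) × (0,b) ⊆ ℝ²`. -/
def rect (a b : ℝ) : Set (Fin 2 → ℝ) :=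
  {x | 0 < x 0 ∧ x 0 < a ∧ 0 < x 1 ∧ x 1 < b}

/-- The function `w(x,y) = (x − a/2)(y − b/2)/(ab)`. -/
noncomputable def wfun (a b : ℝ) : (Fin 2 → ℝ) → ℝ :=
  fun x => (x 0 - a / 2) * (x 1 - b / 2) / (a * b)

/-- The stabilization term `S(v)`: the sum of the squared values of `v` at the four
vertices `(0,0), (a,0), (a,b), (0,b)` of the rectangle `(0,a) × (0,b)`. -/
noncomputable def stab (a b : ℝ) (v : (Fin 2 → ℝ) → ℝ) : ℝ :=
  v ![0, 0] ^ 2 + v ![a, 0] ^ 2 + v ![a, b] ^ 2 + v ![0, b] ^ 2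

/-!
In the affine coordinates `ξ = x/a - 1/2` and `η = y/b - 1/2`, which run from `-1/2` to `1/2`,
the function is `w = ξ η`. For a product `g(x) h(y)` both `S` and the `H¹` seminorm split into
one-dimensional factors: the former is `(g(0)² + g(a)²) (h(0)² + h(b)²)` and the square of the
latter is `‖g'‖² ‖h‖² + ‖g‖² ‖h'‖²` in the `L²` norms of the sides, where `‖ξ‖² = a/12` and
`‖ξ'‖² = 1/a`, and likewise for `η`.
-/

lemma stab_separable (a b : ℝ) (g h : ℝ → ℝ) :
    stab a b (fun x => g (x 0) * h (x 1)) = (g 0 ^ 2 + g a ^ 2) * (h 0 ^ 2 + h b ^ 2) := by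
  simp only [stab, cons_val_zero, cons_val_one]
  ring

lemma grad_separable {g h : ℝ → ℝ} {x : Fin 2 → ℝ} (hg : DifferentiableAt ℝ g (x 0))
    (hh : DifferentiableAt ℝ h (x 1)) :
    grad (fun y => g (y 0) * h (y 1)) x = ![deriv g (x 0) * h (x 1), g (x 0) * deriv h (x 1)] := by
  have hg' := hg.hasDerivAt.comp_hasFDerivAt x (hasFDerivAt_apply (𝕜 := ℝ) (0 : Fin 2) x)
  have hh' := hh.hasDerivAt.comp_hasFDerivAt x (hasFDerivAt_apply (𝕜 := ℝ) (1 : Fin 2) x)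
  have hmul : HasFDerivAt (fun y : Fin 2 → ℝ => g (y 0) * h (y 1)) _ x := hg'.mul hh'
  ext i
  fin_cases i <;> simp [grad, hmul.fderiv, mul_comm]

lemma rect_eq_pi (a b : ℝ) : rect a b = Set.univ.pi fun i => Set.Ioo 0 (![a, b] i) := by
  ext x
  simp [rect, Fin.forall_fin_two, and_assoc]

lemma integrableOn_rect {E : Type*} [NormedAddCommGroup E] {v : (Fin 2 → ℝ) → E}
    (hv : Continuous v) (a b : ℝ) : IntegrableOn v (rect a b) := by
  refine (hv.integrableOn_Icc (a := 0) (b := ![a, b])).mono_set ?_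
  rw [rect_eq_pi, ← Set.pi_univ_Icc]
  exact Set.pi_mono fun i _ => Set.Ioo_subset_Icc_self

lemma setIntegral_rect_separable {𝕜 : Type*} [RCLike 𝕜] (a b : ℝ) (g h : ℝ → 𝕜) :
    ∫ x in rect a b, g (x 0) * h (x 1) =
      (∫ s in Set.Ioo 0 a, g s) * ∫ t in Set.Ioo 0 b, h t := by
  have hprod := integral_fintype_prod_eq_prod ![g, h]
    (μ := fun i => volume.restrict (Set.Ioo 0 (![a, b] i)))
  rw [← Measure.restrict_pi_pi, ← volume_pi, ← rect_eq_pi] at hprod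
  simpa [Fin.prod_univ_two] using hprod

lemma setIntegral_rect_sum_grad_separable_sq (a b : ℝ) {g h : ℝ → ℝ} (hg : ContDiff ℝ 1 g)
    (hh : ContDiff ℝ 1 h) :
    ∫ x in rect a b, ∑ i, (grad (fun y => g (y 0) * h (y 1)) x i) ^ 2 =
      (∫ s in Set.Ioo 0 a, deriv g s ^ 2) * (∫ t in Set.Ioo 0 b, h t ^ 2) +
        (∫ s in Set.Ioo 0 a, g s ^ 2) * ∫ t in Set.Ioo 0 b, deriv h t ^ 2 := by
  have hsum (x : Fin 2 → ℝ) : ∑ i, (grad (fun y => g (y 0) * h (y 1)) x i) ^ 2 =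
      deriv g (x 0) ^ 2 * h (x 1) ^ 2 + g (x 0) ^ 2 * deriv h (x 1) ^ 2 := by
    rw [grad_separable (hg.differentiable one_ne_zero _) (hh.differentiable one_ne_zero _),
      Fin.sum_univ_two]
    simp only [cons_val_zero, cons_val_one, mul_pow]
  have : Continuous (deriv g) := hg.continuous_deriv_one
  have : Continuous (deriv h) := hh.continuous_deriv_one
  simp_rw [hsum]
  rw [integral_add (integrableOn_rect (by fun_prop) a b) (integrableOn_rect (by fun_prop) a b),
    setIntegral_rect_separable a b (fun s => deriv g s ^ 2) (fun t => h t ^ 2),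
    setIntegral_rect_separable a b (fun s => g s ^ 2) (fun t => deriv h t ^ 2)]

/-- The affine coordinate on the interval `(0, c)` which is `-1/2` at `0` and `1/2` at `c`;
`wfun` is the product of two of them. For `c = 0` it is identically `0`. -/
noncomputable def centeredCoord (c t : ℝ) : ℝ :=
  (t - c / 2) / c

lemma centeredCoord_zero {c : ℝ} (hc : c ≠ 0) : centeredCoord c 0 = -(1 / 2) := by
  unfold centeredCoord
  field_simp
  ring

lemma centeredCoord_self {c : ℝ} (hc : c ≠ 0) : centeredCoord c c = 1 / 2 := by
  unfold centeredCoord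
  field_simp
  ring

lemma contDiff_centeredCoord {n : WithTop ℕ∞} (c : ℝ) : ContDiff ℝ n (centeredCoord c) :=
  (contDiff_id.sub contDiff_const).div_const c

lemma deriv_centeredCoord (c t : ℝ) : deriv (centeredCoord c) t = 1 / c :=
  (((hasDerivAt_id t).sub_const (c / 2)).div_const c).deriv

lemma integral_centeredCoord_sq {c : ℝ} (hc : 0 < c) :
    ∫ t in Set.Ioo 0 c, centeredCoord c t ^ 2 = c / 12 := by
  simp only [centeredCoord, div_pow, integral_div]
  rw [← integral_Ioc_eq_integral_Ioo, ← intervalIntegral.integral_of_le hc.le,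
    intervalIntegral.integral_comp_sub_right (fun t => t ^ 2), integral_pow]
  field_simp
  ring

lemma integral_deriv_centeredCoord_sq {c : ℝ} (hc : 0 < c) :
    ∫ t in Set.Ioo 0 c, deriv (centeredCoord c) t ^ 2 = 1 / c := by
  simp only [deriv_centeredCoord, setIntegral_const, Real.volume_real_Ioo_of_le hc.le, sub_zero,
    smul_eq_mul]
  field_simp

lemma wfun_eq_centeredCoord_mul (a b : ℝ) :
    wfun a b = fun x => centeredCoord a (x 0) * centeredCoord b (x 1) :=
  funext fun _ => mul_div_mul_comm _ _ _ _

lemma stab_wfun {a b : ℝ} (ha : a ≠ 0) (hb : b ≠ 0) : stab a b (wfun a b) = 1 / 4 := by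
  rw [wfun_eq_centeredCoord_mul, stab_separable, centeredCoord_zero ha, centeredCoord_self ha,
    centeredCoord_zero hb, centeredCoord_self hb]
  norm_num

lemma setIntegral_rect_sum_grad_wfun_sq {a b : ℝ} (ha : 0 < a) (hb : 0 < b) :
    ∫ x in rect a b, ∑ i, (grad (wfun a b) x i) ^ 2 = 1 / 12 * (a / b + b / a) := by
  rw [wfun_eq_centeredCoord_mul,
    setIntegral_rect_sum_grad_separable_sq a b (contDiff_centeredCoord a)
      (contDiff_centeredCoord b),
    integral_deriv_centeredCoord_sq ha, integral_centeredCoord_sq hb,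
    integral_centeredCoord_sq ha, integral_deriv_centeredCoord_sq hb]
  ring

lemma sqrt_sq_div_div_sq_div {c d e : ℝ} (hc : 0 ≤ c) (hd : 0 ≤ d) (he : e ≠ 0) :
    Real.sqrt ((c ^ 2 / e) / (d ^ 2 / e)) = c / d := by
  rw [div_div_div_cancel_right₀ he, ← div_pow, Real.sqrt_sq (div_nonneg hc hd)]

theorem stab_ratio_wfun_general {a b : ℝ} (ha : 0 < a) (hb : 0 < b) :
    stab a b (wfun a b) = 1 / 4
    ∧ (∫ x in rect a b, ∑ i, (grad (wfun a b) x i) ^ 2) / stab a b (wfun a b)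
        = (1 / 3) * (Real.sqrt ((a ^ 2 / 12) / (b ^ 2 / 12))
            + Real.sqrt ((b ^ 2 / 12) / (a ^ 2 / 12)))
    ∧ (∫ x in rect a b, ∑ i, (grad (wfun a b) x i) ^ 2) / stab a b (wfun a b)
        = (1 / 3) * (a / b + b / a) := by
  have hstab := stab_wfun ha.ne' hb.ne'
  have hratio : (∫ x in rect a b, ∑ i, (grad (wfun a b) x i) ^ 2) / stab a b (wfun a b)
      = (1 / 3) * (a / b + b / a) := by
    rw [hstab, setIntegral_rect_sum_grad_wfun_sq ha hb]
    ring
  refine ⟨hstab, ?_, hratio⟩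
  rw [hratio, sqrt_sq_div_div_sq_div ha.le hb.le (by norm_num),
    sqrt_sq_div_div_sq_div hb.le ha.le (by norm_num)]

/-- `S(w) = 1/4`, and with `λ₁ = a²/12`, `λ₂ = b²/12` the ratio between the `H¹`
seminorm squared of `w` and the stabilization term satisfies
`|w|²_{H¹(K*)}/S(w) = (1/3)(√(λ₁/λ₂) + √(λ₂/λ₁)) = (1/3)(a/b + b/a)`. -/
theorem stab_ratio_wfun (a b : ℝ) (hb : 0 < b) (hba : b ≤ a) :
    stab a b (wfun a b) = 1 / 4
    ∧ (∫ x in rect a b, ∑ i, (grad (wfun a b) x i) ^ 2) / stab a b (wfun a b)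
        = (1 / 3) * (Real.sqrt ((a ^ 2 / 12) / (b ^ 2 / 12))
            + Real.sqrt ((b ^ 2 / 12) / (a ^ 2 / 12)))
    ∧ (∫ x in rect a b, ∑ i, (grad (wfun a b) x i) ^ 2) / stab a b (wfun a b)
        = (1 / 3) * (a / b + b / a) :=
  stab_ratio_wfun_general (hb.trans_le hba) hb
end
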